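/- Let l and m be fixed positive integers. There exists a constant C > 0 such that for every integer k with k ≥ 2 and k > l, and every integer r with r ≥ k + m, the number of tuples a ∈ A_{k,l,m} whose associated polynomial satisfies p_a(r) = 0 is at most C. -/

import Mathlib

noncomputable section

/-- The falling factorial `(x)_j = x (x-1) ⋯ (x-j+1)`, with `(x)_0 = 1`. -/
def fall (x : ℤ) (j : ℕ) : ℤ := ∏ i ∈ Finset.range j, (x - (i : ℤ))

/-- `a ∈ A_{k,l,m}`: an `(l+1)`-tuple of nonnegative integers with
`∑_{j=0}^{l} (j+m) a_j = k + m`. -/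
def memA (k l m : ℕ) (a : Fin (l + 1) → ℕ) : Prop :=
  ∑ j : Fin (l + 1), ((j : ℕ) + m) * a j = k + m

/-- The polynomial
`p_a(x) = (x-m)_k - (-1)^k (k+m-1)_{k-l} ∑_{j=0}^{l} (-1)^j a_j (l+m-1)_{l-j} (x-m)_j`
associated to `a ∈ A_{k,l,m}`. -/
def pA (k l m : ℕ) (a : Fin (l + 1) → ℕ) (x : ℤ) : ℤ :=
  fall (x - (m : ℤ)) k -
    (-1 : ℤ) ^ k * fall ((k : ℤ) + (m : ℤ) - 1) (k - l) *
      ∑ j : Fin (l + 1), (-1 : ℤ) ^ (j : ℕ) * (a j : ℤ) * fall ((l : ℤ) + (m : ℤ) - 1) (l - (j : ℕ))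
        * fall (x - (m : ℤ)) (j : ℕ)

lemma fall_succ' (x : ℤ) (j : ℕ) : fall x (j+1) = fall x j * (x - j) := by
  simp [fall, Finset.prod_range_succ]

lemma fall_pos' (x : ℤ) (j : ℕ) (h : (j : ℤ) ≤ x) : 0 < fall x j := by
  unfold fall
  apply Finset.prod_pos
  intro i hi
  have := Finset.mem_range.1 hi
  omega

lemma weight_bound (l m k : ℕ) (hm : 0 < m) (n : ℤ) (hk : l < k) (hn : (k : ℤ) ≤ n)
    (W : ℕ → ℤ)
    (hW : ∀ j, W j = fall ((l : ℤ) + (m : ℤ) - 1) (l - j) * fall n j) (i j : ℕ) (hij : i + 1 ≤ j)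
    (hj : j ≤ l) :
    W i * (k + m) ≤ (((l : ℤ) + m + 1) ^ 2) ^ j * W j := by
  have hpos : ∀ j, j ≤ l → 0 < W j := by
    intro j hj
    rw [hW]
    exact mul_pos (fall_pos' _ _ (by omega)) (fall_pos' _ _ (by omega))
  have hrec : ∀ j, j < l → W j * (n - j) = (m + j) * W (j+1) := by
    intro j hj
    rw [hW, hW, fall_succ' n j]
    obtain ⟨t, rfl⟩ : ∃ t, l = j + 1 + t := ⟨l - (j+1), by omega⟩
    have h1 : j + 1 + t - j = t + 1 := by omega
    have h2 : j + 1 + t - (j+1) = t := by omega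
    rw [h1, h2, fall_succ']
    push_cast
    ring
  have hM : (1 : ℤ) ≤ ((l : ℤ) + m + 1) ^ 2 := one_le_pow₀ (by omega)
  have hs1 : ∀ j, j < l → W j * (k + m) ≤ ((l : ℤ) + m + 1) ^ 2 * W (j+1) := by
    intro j hj
    have h0 := hpos j hj.le
    have h1 := hpos (j+1) hj
    have h2 : (k : ℤ) + m ≤ (l + m + 1) * (n - j) := by
      have : (1 : ℤ) ≤ n - j := by omega
      nlinarith
    calc W j * (k + m) ≤ W j * ((l + m + 1) * (n - j)) := by gcongr
      _ = (l + m + 1) * (W j * (n - j)) := by ring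
      _ = (l + m + 1) * ((m + j) * W (j+1)) := by rw [hrec j hj]
      _ ≤ (l + m + 1) * ((l + m + 1) * W (j+1)) := by
        have h3 : (m : ℤ) + j ≤ l + m + 1 := by omega
        exact mul_le_mul_of_nonneg_left (mul_le_mul_of_nonneg_right h3 h1.le) (by omega)
      _ = _ := by ring
  induction j, hij using Nat.le_induction with
  | base =>
    refine (hs1 i hj).trans ?_
    have h1 := hpos (i+1) hj
    gcongr
    exact le_self_pow₀ hM (by omega)
  | succ j hij ih =>
    have h0 := hpos j (by omega)
    have h1 := hs1 j (by omega)
    have h2 : W j ≤ W j * (k + m) := le_mul_of_one_le_right h0.le (by omega)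
    calc W i * (k + m) ≤ (((l : ℤ) + m + 1) ^ 2) ^ j * W j := ih (by omega)
      _ ≤ (((l : ℤ) + m + 1) ^ 2) ^ j * (((l : ℤ) + m + 1) ^ 2 * W (j+1)) := by
        gcongr
        exact h2.trans h1
      _ = _ := by ring

lemma memA_le (k l m : ℕ) (hm : 0 < m) (a : Fin (l + 1) → ℕ) (h : memA k l m a) (i) :
    a i ≤ k + m := by
  unfold memA at h
  rw [← h]
  refine le_trans ?_ (Finset.single_le_sum (f := fun j : Fin (l+1) => ((j : ℕ) + m) * a j)
    (fun _ _ => Nat.zero_le _) (Finset.mem_univ i))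
  exact Nat.le_mul_of_pos_left _ (by omega)

/-- For fixed `l, m`, and any `k ≥ 2` with `k > l` and any integer
`r ≥ k + m`, the number of `a ∈ A_{k,l,m}` with `p_a(r) = 0` is bounded by a constant
depending only on `l` and `m`. -/
theorem count_large_root
    (l m : ℕ) (hl : 0 < l) (hm : 0 < m) :
    ∃ C : ℕ, 0 < C ∧ ∀ k : ℕ, 2 ≤ k → l < k → ∀ r : ℤ, (k : ℤ) + m ≤ r →
      Nat.card {a : Fin (l + 1) → ℕ // memA k l m a ∧ pA k l m a r = 0} ≤ C := by
  set D : ℕ := (l + 1) * ((l + m + 1) ^ 2) ^ l with hD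
  refine ⟨(D + 1) ^ (l + 1), by positivity, ?_⟩
  intro k _ hk r hr
  set W : ℕ → ℤ := fun j => fall ((l : ℤ) + (m : ℤ) - 1) (l - j) * fall (r - m) j with hWdef
  have hWpos : ∀ j, j ≤ l → 0 < W j := by
    intro j hj
    exact mul_pos (fall_pos' _ _ (by omega)) (fall_pos' _ _ (by omega))
  have key : ∀ a b : Fin (l + 1) → ℕ, memA k l m a → pA k l m a r = 0 → memA k l m b →
      pA k l m b r = 0 → (∀ i, a i % (D + 1) = b i % (D + 1)) → a = b := by
    intro a b ha ha' hb hb' hmod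
    by_contra hne
    have hS : (Finset.univ.filter (fun i => a i ≠ b i)).Nonempty := by
      obtain ⟨i, hi⟩ := Function.ne_iff.1 hne
      exact ⟨i, by simpa using hi⟩
    obtain ⟨j, hjS, hjmax⟩ := Finset.exists_max_image _ id hS
    have hj : a j ≠ b j := by simpa using hjS
    have htop : ∀ i, j < i → a i = b i := by
      intro i hi
      by_contra h
      exact absurd (hjmax i (by simpa using h)) (by simpa using hi)
    have hsum : ∑ i : Fin (l + 1), (-1 : ℤ) ^ (i : ℕ) * ((a i : ℤ) - b i) * W i = 0 := by
      have hF : (-1 : ℤ) ^ k * fall ((k : ℤ) + (m : ℤ) - 1) (k - l) ≠ 0 :=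
        mul_ne_zero (by simp) (fall_pos' _ _ (by omega)).ne'
      unfold pA at ha' hb'
      have h := mul_left_cancel₀ hF ((sub_eq_zero.1 ha').symm.trans (sub_eq_zero.1 hb'))
      rw [← sub_eq_zero, ← Finset.sum_sub_distrib] at h
      rw [← h]
      apply Finset.sum_congr rfl
      intro i _
      simp only [hWdef]
      ring
    have hjl : (j : ℕ) ≤ l := by omega
    have hWj := hWpos j hjl
    rw [← Finset.add_sum_erase _ _ (Finset.mem_univ j)] at hsum
    have habs : |(a j : ℤ) - b j| * W j ≤ D * W j := by
      have h1 : |(a j : ℤ) - b j| * W j = |(-1 : ℤ) ^ (j : ℕ) * ((a j : ℤ) - b j) * W j| := by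
        simp [abs_mul, abs_of_pos hWj]
      rw [h1, eq_neg_of_add_eq_zero_left hsum, abs_neg]
      refine (Finset.abs_sum_le_sum_abs _ _).trans ?_
      have hb1 : ∀ i ∈ Finset.univ.erase j,
          |(-1 : ℤ) ^ (i : ℕ) * ((a i : ℤ) - b i) * W i| ≤ (((l : ℤ) + m + 1) ^ 2) ^ l * W j := by
        intro i hi
        have hij : i ≠ j := (Finset.mem_erase.1 hi).1
        rcases lt_or_gt_of_ne hij with h | h
        · have hWi := hWpos i (by omega)
          have hw := weight_bound l m k hm (r - m) hk (by omega) W (fun _ => rfl) i j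
            (by exact h) hjl
          have hd : |(a i : ℤ) - b i| ≤ k + m := by
            have h1 := memA_le k l m hm a ha i
            have h2 := memA_le k l m hm b hb i
            rw [abs_le]
            omega
          have hM : (1 : ℤ) ≤ ((l : ℤ) + m + 1) ^ 2 := one_le_pow₀ (by omega)
          calc |(-1 : ℤ) ^ (i : ℕ) * ((a i : ℤ) - b i) * W i| = |(a i : ℤ) - b i| * W i := by
                simp [abs_mul, abs_of_pos hWi]
            _ ≤ (k + m) * W i := by gcongr
            _ = W i * (k + m) := by ring
            _ ≤ _ := hw
            _ ≤ _ := by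
              gcongr
        · rw [htop i h]
          simp only [sub_self, mul_zero, zero_mul, abs_zero]
          positivity
      refine (Finset.sum_le_card_nsmul _ _ _ hb1).trans ?_
      rw [Finset.card_erase_of_mem (Finset.mem_univ j), Finset.card_univ, Fintype.card_fin,
        nsmul_eq_mul, hD]
      push_cast
      rw [mul_assoc]
      have : (0 : ℤ) ≤ (((l : ℤ) + m + 1) ^ 2) ^ l * W j := by positivity
      apply mul_le_mul_of_nonneg_right _ this
      simp
    have hle := le_of_mul_le_mul_right habs hWj
    have hdvd : ((D + 1 : ℕ) : ℤ) ∣ (a j : ℤ) - b j :=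
      (Nat.modEq_iff_dvd.1 (show b j ≡ a j [MOD (D+1)] from (hmod j).symm))
    have h0 := Int.eq_zero_of_abs_lt_dvd hdvd (by push_cast; omega)
    omega
  let f : {a : Fin (l + 1) → ℕ // memA k l m a ∧ pA k l m a r = 0} → (Fin (l + 1) → Fin (D + 1)) :=
    fun a i => ⟨a.1 i % (D + 1), Nat.mod_lt _ (Nat.succ_pos _)⟩
  have hf : Function.Injective f := by
    intro a b hab
    apply Subtype.ext
    refine key _ _ a.2.1 a.2.2 b.2.1 b.2.2 ?_
    intro i
    exact congrArg Fin.val (congrFun hab i)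
  have := Nat.card_le_card_of_injective f hf
  simpa using this
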